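/- The sequence of intersected sets (D̃_n^a)_{n∈ℕ}, where D̃_n^a = ⋂_{m ≤ n} D_m^a and D_m^a = {θ ∈ Θ : R_{α,β,m}(θ) ≤ 1/a}, is a valid confidence sequence: Pr_{θ*}(∀ n ∈ ℕ : θ* ∈ D̃_n^a) ≥ 1 − a for every a ∈ (0,1). -/

import Mathlib

open MeasureTheory ENNReal
open scoped BigOperators Classical

noncomputable section

/-- Division in `ℝ≥0∞` with the convention that the ratio is `0` when the
denominator is `0`. -/
def safeDiv (a b : ℝ≥0∞) : ℝ≥0∞ := if b = 0 then 0 else a / b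

variable {d : ℕ} {π : Fin d → Type*} [∀ i, MeasurableSpace (π i)]

/-- The marginal density on the coordinates in `S`, obtained by integrating a density
out over the coordinates in `[d] \ S` (as a function of the full vector, depending only
on the coordinates in `S`). -/
def marginal (μ : ∀ i, Measure (π i)) (S : Finset (Fin d))
    (f : (∀ i, π i) → ℝ≥0∞) : (∀ i, π i) → ℝ≥0∞ :=
  MeasureTheory.lmarginal μ Sᶜ f

/-- The conditional density of the coordinates in `T1` given the coordinates in `T2`,
with the convention that the ratio is `0` when the denominator is `0`. -/
def condDens (μ : ∀ i, Measure (π i)) (T1 T2 : Finset (Fin d))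
    (f : (∀ i, π i) → ℝ≥0∞) (x : ∀ i, π i) : ℝ≥0∞ :=
  safeDiv (marginal μ (T1 ∪ T2) f x) (marginal μ T2 f x)

/-- `𝕊_d`: the nonempty subsets of `[d]`. -/
abbrev Sd (d : ℕ) := {S : Finset (Fin d) // S.Nonempty}

/-- `𝕋_d`: ordered pairs of disjoint nonempty subsets of `[d]`. -/
abbrev Td (d : ℕ) := {T : Finset (Fin d) × Finset (Fin d) //
  T.1.Nonempty ∧ T.2.Nonempty ∧ Disjoint T.1 T.2}

/-- The individual composite likelihood
`p_{α,β}(x;θ) = ∏_S p_S(x_S;θ)^(α_S/γ) ∏_T p(x_{T←}|x_{T→};θ)^(β_T/γ)`,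
where `f = p(·;θ)` is the joint density. -/
def compLik (μ : ∀ i, Measure (π i)) (α : Sd d → ℝ) (β : Td d → ℝ) (γ : ℝ)
    (f : (∀ i, π i) → ℝ≥0∞) (x : ∀ i, π i) : ℝ≥0∞ :=
  (∏ S : Sd d, marginal μ S.1 f x ^ (α S / γ)) *
  (∏ T : Td d, condDens μ T.1.1 T.1.2 f x ^ (β T / γ))


section Helpers

lemma pull_lmarginal {d : ℕ} {π : Fin d → Type*} [∀ i, MeasurableSpace (π i)]
    (μ : ∀ i, Measure (π i)) (s : Finset (Fin d))
    (f g : (∀ i, π i) → ℝ≥0∞) (hf : Measurable f)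
    (hg : ∀ x y, (∀ i ∉ s, x i = y i) → g x = g y) :
    lmarginal μ s (fun x => f x * g x) = fun x => lmarginal μ s f x * g x := by
  ext x
  unfold lmarginal
  have : ∀ y, g (Function.updateFinset x s y) = g x := fun y => by
    apply hg
    intro i hi
    simp [Function.updateFinset, hi]
  simp_rw [this]
  rw [lintegral_mul_const]
  exact hf.comp measurable_updateFinset

lemma marginal_meas {d : ℕ} {π : Fin d → Type*} [∀ i, MeasurableSpace (π i)]
    (μ : ∀ i, Measure (π i)) [∀ i, SigmaFinite (μ i)] (S : Finset (Fin d))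
    {f : (∀ i, π i) → ℝ≥0∞} (hf : Measurable f) : Measurable (marginal μ S f) :=
  hf.lmarginal μ

lemma marginal_dep {d : ℕ} {π : Fin d → Type*} [∀ i, MeasurableSpace (π i)]
    (μ : ∀ i, Measure (π i)) {S S' : Finset (Fin d)} (h : S ⊆ S')
    (f : (∀ i, π i) → ℝ≥0∞) (x y : ∀ i, π i) (hxy : ∀ i ∈ S', x i = y i) :
    marginal μ S f x = marginal μ S f y := by
  unfold marginal
  apply lmarginal_congr
  intro i hi
  exact hxy i (h (by simpa using hi))

lemma lintegral_pull {d : ℕ} {π : Fin d → Type*} [∀ i, MeasurableSpace (π i)]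
    (μ : ∀ i, Measure (π i)) [∀ i, SigmaFinite (μ i)] (S : Finset (Fin d))
    (f g : (∀ i, π i) → ℝ≥0∞) (hf : Measurable f) (hgm : Measurable g)
    (hg : ∀ x y, (∀ i ∈ S, x i = y i) → g x = g y) (x0 : ∀ i, π i) :
    ∫⁻ x, f x * g x ∂(Measure.pi μ) = lmarginal μ S (fun x => marginal μ S f x * g x) x0 := by
  rw [lintegral_eq_lmarginal_univ x0, ← Finset.union_compl S,
    lmarginal_union μ (fun x => f x * g x) (hf.mul hgm) disjoint_compl_right]
  rw [pull_lmarginal μ Sᶜ f g hf (fun x y h => hg x y (fun i hi => h i (by simpa using hi)))]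
  rfl

lemma pi_point {d : ℕ} {π : Fin d → Type*} [∀ i, MeasurableSpace (π i)]
    (μ : ∀ i, Measure (π i)) {f : (∀ i, π i) → ℝ≥0∞}
    (h : ∫⁻ x, f x ∂(Measure.pi μ) = 1) : Nonempty (∀ i, π i) := by
  by_contra hne
  rw [not_nonempty_iff] at hne
  simp [lintegral_of_isEmpty] at h

lemma my_inv_mul (a : ℝ≥0∞) : a * a⁻¹ ≤ 1 := by
  rw [← div_eq_mul_inv]; exact ENNReal.div_self_le_one

lemma ratio_marg {d : ℕ} {π : Fin d → Type*} [∀ i, MeasurableSpace (π i)]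
    (μ : ∀ i, Measure (π i)) [∀ i, SigmaFinite (μ i)] (S : Finset (Fin d))
    {q r : (∀ i, π i) → ℝ≥0∞} (hq : Measurable q) (hr : Measurable r)
    (hq1 : ∫⁻ x, q x ∂(Measure.pi μ) = 1) :
    ∫⁻ x, r x * (marginal μ S q x * (marginal μ S r x)⁻¹) ∂(Measure.pi μ) ≤ 1 := by
  obtain ⟨x0⟩ := pi_point μ hq1
  have mq := marginal_meas μ S hq
  have mr := marginal_meas μ S hr
  rw [lintegral_pull μ S r (fun x => marginal μ S q x * (marginal μ S r x)⁻¹) hr (mq.mul mr.inv) (fun x y h => by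
    rw [marginal_dep μ subset_rfl q x y h, marginal_dep μ subset_rfl r x y h]) x0]
  have h1 := lintegral_pull μ S q (fun _ => 1) hq measurable_const (fun _ _ _ => rfl) x0
  simp only [mul_one, hq1] at h1
  rw [h1]
  refine lmarginal_mono (fun x => ?_) x0
  calc marginal μ S r x * (marginal μ S q x * (marginal μ S r x)⁻¹)
      = marginal μ S q x * (marginal μ S r x * (marginal μ S r x)⁻¹) := by ring
    _ ≤ marginal μ S q x * 1 := by gcongr; exact my_inv_mul _
    _ = _ := mul_one _

lemma ratio_cond {d : ℕ} {π : Fin d → Type*} [∀ i, MeasurableSpace (π i)]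
    (μ : ∀ i, Measure (π i)) [∀ i, SigmaFinite (μ i)] (U B : Finset (Fin d)) (hB : B ⊆ U)
    {q r : (∀ i, π i) → ℝ≥0∞} (hq : Measurable q) (hr : Measurable r)
    (hr1 : ∫⁻ x, r x ∂(Measure.pi μ) = 1) :
    ∫⁻ x, r x * (marginal μ U q x * (marginal μ B q x)⁻¹ *
      ((marginal μ U r x)⁻¹ * marginal μ B r x)) ∂(Measure.pi μ) ≤ 1 := by
  obtain ⟨x0⟩ := pi_point μ hr1
  have mqU := marginal_meas μ U hq
  have mrU := marginal_meas μ U hr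
  have mqB := marginal_meas μ B hq
  have mrB := marginal_meas μ B hr
  rw [lintegral_pull μ U r (fun x => marginal μ U q x * (marginal μ B q x)⁻¹ *
      ((marginal μ U r x)⁻¹ * marginal μ B r x)) hr ((mqU.mul mqB.inv).mul (mrU.inv.mul mrB)) (fun x y h => by
    rw [marginal_dep μ subset_rfl q x y h, marginal_dep μ subset_rfl r x y h,
      marginal_dep μ hB q x y h, marginal_dep μ hB r x y h]) x0]
  have h1 := lintegral_pull μ U q (fun x => (marginal μ B q x)⁻¹ * marginal μ B r x) hq
    (mqB.inv.mul mrB) (fun x y h => by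
      rw [marginal_dep μ hB q x y h, marginal_dep μ hB r x y h]) x0
  have h2 := lintegral_pull μ B q (fun x => (marginal μ B q x)⁻¹ * marginal μ B r x) hq
    (mqB.inv.mul mrB) (fun x y h => by
      rw [marginal_dep μ subset_rfl q x y h, marginal_dep μ subset_rfl r x y h]) x0
  have h3 := lintegral_pull μ B r (fun _ => 1) hr measurable_const (fun _ _ _ => rfl) x0
  simp only [mul_one, hr1] at h3
  calc _ ≤ lmarginal μ U (fun x => marginal μ U q x *
            ((marginal μ B q x)⁻¹ * marginal μ B r x)) x0 := by
        refine lmarginal_mono (fun x => ?_) x0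
        calc marginal μ U r x * (marginal μ U q x * (marginal μ B q x)⁻¹ *
              ((marginal μ U r x)⁻¹ * marginal μ B r x))
            = marginal μ U q x * ((marginal μ B q x)⁻¹ * marginal μ B r x) *
              (marginal μ U r x * (marginal μ U r x)⁻¹) := by ring
          _ ≤ marginal μ U q x * ((marginal μ B q x)⁻¹ * marginal μ B r x) * 1 := by
              gcongr; exact my_inv_mul _
          _ = _ := mul_one _
    _ = lmarginal μ B (fun x => marginal μ B q x *
            ((marginal μ B q x)⁻¹ * marginal μ B r x)) x0 := by rw [← h1, h2]
    _ ≤ lmarginal μ B (marginal μ B r) x0 := by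
        refine lmarginal_mono (fun x => ?_) x0
        calc marginal μ B q x * ((marginal μ B q x)⁻¹ * marginal μ B r x)
            = marginal μ B r x * (marginal μ B q x * (marginal μ B q x)⁻¹) := by ring
          _ ≤ marginal μ B r x * 1 := by gcongr; exact my_inv_mul _
          _ = _ := mul_one _
    _ = 1 := h3.symm

lemma marg_good {d : ℕ} {π : Fin d → Type*} [∀ i, MeasurableSpace (π i)]
    (μ : ∀ i, Measure (π i)) [∀ i, SigmaFinite (μ i)] (S : Finset (Fin d))
    {r : (∀ i, π i) → ℝ≥0∞} (hr : Measurable r)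
    (hr1 : ∫⁻ x, r x ∂(Measure.pi μ) = 1) :
    ∀ᵐ x ∂((Measure.pi μ).withDensity r), marginal μ S r x ≠ 0 ∧ marginal μ S r x ≠ ⊤ := by
  obtain ⟨x0⟩ := pi_point μ hr1
  have mr := marginal_meas μ S hr
  -- the bad indicator
  have key : ∀ c : ℝ≥0∞, c = 0 ∨ c = ⊤ →
      ∀ᵐ x ∂((Measure.pi μ).withDensity r), marginal μ S r x ≠ c := by
    intro c hc
    have hs : MeasurableSet {x | marginal μ S r x = c} := mr (measurableSet_singleton c)
    set J : (∀ i, π i) → ℝ≥0∞ := Set.indicator {x | marginal μ S r x = c} (fun _ => 1) with hJ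
    have hJm : Measurable J := measurable_const.indicator hs
    have hJd : ∀ x y, (∀ i ∈ S, x i = y i) → J x = J y := by
      intro x y h
      have hxy := marginal_dep μ subset_rfl r x y h
      by_cases hy : marginal μ S r y = c
      · have hx : marginal μ S r x = c := hxy.trans hy
        simp [hJ, hx, hy]
      · have hx : ¬ marginal μ S r x = c := fun e => hy (hxy.symm.trans e)
        simp [hJ, hx, hy]
    have e1 := lintegral_pull μ S r J hr hJm hJd x0
    have e2 := lintegral_pull μ S r (fun x => J x * 2) hr (hJm.mul_const 2)
      (fun x y h => by rw [hJd x y h]) x0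
    have e3 : (fun x => marginal μ S r x * (J x * 2)) = fun x => marginal μ S r x * J x := by
      ext x
      by_cases hx : marginal μ S r x = c
      · have : J x = 1 := by simp [hJ, hx]
        rw [this, hx]
        rcases hc with rfl | rfl <;> simp
      · have : J x = 0 := by simp [hJ, hx]
        simp [this]
    rw [e3, ← e1] at e2
    have e4 : ∫⁻ x, r x * (J x * 2) ∂(Measure.pi μ) = (∫⁻ x, r x * J x ∂(Measure.pi μ)) * 2 := by
      rw [← lintegral_mul_const (f := fun x => r x * J x) _ (hr.mul hJm)]
      simp only [mul_assoc]
    rw [e4] at e2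
    have hle : ∫⁻ x, r x * J x ∂(Measure.pi μ) ≤ 1 := by
      rw [← hr1]
      refine lintegral_mono (fun x => ?_)
      calc r x * J x ≤ r x * 1 := by
            gcongr
            exact Set.indicator_le_self' (by simp) x |>.trans le_rfl
        _ = r x := mul_one _
    have hz : ∫⁻ x, r x * J x ∂(Measure.pi μ) = 0 := by
      generalize ∫⁻ x, r x * J x ∂(Measure.pi μ) = k at e2 hle ⊢
      have hk : k ≠ ⊤ := ne_top_of_le_ne_top one_ne_top hle
      lift k to NNReal using hk
      norm_cast at e2 ⊢
      have : (k : ℝ) * 2 = k := by exact_mod_cast e2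
      have : (k : ℝ) = 0 := by linarith
      exact_mod_cast this
    rw [ae_iff]
    simp only [ne_eq, not_not]
    rw [withDensity_apply _ hs, ← lintegral_indicator hs, ← hz]
    congr 1
    ext x
    by_cases hx : marginal μ S r x = c <;> simp [hJ, hx]
  filter_upwards [key 0 (Or.inl rfl), key ⊤ (Or.inr rfl)] with x h1 h2 using ⟨h1, h2⟩

/-- the dominating ratio -/
def GR {d : ℕ} {π : Fin d → Type*} [∀ i, MeasurableSpace (π i)]
    (μ : ∀ i, Measure (π i)) (α : Sd d → ℝ) (β : Td d → ℝ) (γ : ℝ)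
    (q r : (∀ i, π i) → ℝ≥0∞) (x : ∀ i, π i) : ℝ≥0∞ :=
  (∏ S : Sd d, (marginal μ S.1 q x * (marginal μ S.1 r x)⁻¹) ^ (α S / γ)) *
  (∏ T : Td d, (marginal μ (T.1.1 ∪ T.1.2) q x * (marginal μ T.1.2 q x)⁻¹ *
      ((marginal μ (T.1.1 ∪ T.1.2) r x)⁻¹ * marginal μ T.1.2 r x)) ^ (β T / γ))

lemma GR_int {d : ℕ} {π : Fin d → Type*} [∀ i, MeasurableSpace (π i)]
    (μ : ∀ i, Measure (π i)) [∀ i, SigmaFinite (μ i)] (α : Sd d → ℝ) (β : Td d → ℝ) (γ : ℝ)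
    (hα : ∀ S, 0 ≤ α S) (hβ : ∀ T, 0 ≤ β T)
    (hγ : γ = ∑ S, α S + ∑ T, β T) (hγpos : 0 < γ)
    {q r : (∀ i, π i) → ℝ≥0∞} (hq : Measurable q) (hr : Measurable r)
    (hq1 : ∫⁻ x, q x ∂(Measure.pi μ) = 1) (hr1 : ∫⁻ x, r x ∂(Measure.pi μ) = 1) :
    ∫⁻ x, GR μ α β γ q r x ∂((Measure.pi μ).withDensity r) ≤ 1 := by
  let f : Sd d ⊕ Td d → (∀ i, π i) → ℝ≥0∞ := Sum.elim
    (fun S x => marginal μ S.1 q x * (marginal μ S.1 r x)⁻¹)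
    (fun T x => marginal μ (T.1.1 ∪ T.1.2) q x * (marginal μ T.1.2 q x)⁻¹ *
      ((marginal μ (T.1.1 ∪ T.1.2) r x)⁻¹ * marginal μ T.1.2 r x))
  let w : Sd d ⊕ Td d → ℝ := Sum.elim (fun S => α S / γ) (fun T => β T / γ)
  have hfm : ∀ i, Measurable (f i) := by
    rintro (S | T)
    · exact (marginal_meas μ _ hq).mul (marginal_meas μ _ hr).inv
    · exact ((marginal_meas μ _ hq).mul (marginal_meas μ _ hq).inv).mul
        ((marginal_meas μ _ hr).inv.mul (marginal_meas μ _ hr))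
  have hw1 : ∑ i, w i = 1 := by
    simp only [w, Fintype.sum_sum_type, Sum.elim_inl, Sum.elim_inr]
    rw [← Finset.sum_div, ← Finset.sum_div, ← add_div, ← hγ, div_self hγpos.ne']
  have hw0 : ∀ i, 0 ≤ w i := by
    rintro (S | T)
    · exact div_nonneg (hα S) hγpos.le
    · exact div_nonneg (hβ T) hγpos.le
  have hf1 : ∀ i, ∫⁻ x, f i x ∂((Measure.pi μ).withDensity r) ≤ 1 := by
    intro i
    rw [lintegral_withDensity_eq_lintegral_mul _ hr (hfm i)]
    rcases i with S | T
    · exact ratio_marg μ S.1 hq hr hq1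
    · exact ratio_cond μ _ _ Finset.subset_union_right hq hr hr1
  have := ENNReal.lintegral_prod_norm_pow_le (μ := (Measure.pi μ).withDensity r)
    Finset.univ (f := f) (fun i _ => (hfm i).aemeasurable) hw1 (fun i _ => hw0 i)
  have hG : ∀ x, GR μ α β γ q r x = ∏ i, f i x ^ w i := by
    intro x
    simp [GR, f, w, Fintype.prod_sum_type]
  simp_rw [hG]
  refine this.trans ?_
  exact Finset.prod_le_one' (fun i _ => ENNReal.rpow_le_one (hf1 i) (hw0 i))

lemma safeDiv_le (a b : ℝ≥0∞) : safeDiv a b ≤ a * b⁻¹ := by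
  unfold safeDiv
  split_ifs
  · simp
  · rw [div_eq_mul_inv]

lemma compLik_le {d : ℕ} {π : Fin d → Type*} [∀ i, MeasurableSpace (π i)]
    (μ : ∀ i, Measure (π i)) (α : Sd d → ℝ) (β : Td d → ℝ) (γ : ℝ)
    (hα : ∀ S, 0 ≤ α S) (hβ : ∀ T, 0 ≤ β T) (hγpos : 0 < γ)
    (q r : (∀ i, π i) → ℝ≥0∞) (x : ∀ i, π i)
    (hx : ∀ S, marginal μ S r x ≠ 0 ∧ marginal μ S r x ≠ ⊤) :
    compLik μ α β γ q x ≤ GR μ α β γ q r x * compLik μ α β γ r x := by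
  unfold compLik GR
  rw [mul_mul_mul_comm, ← Finset.prod_mul_distrib, ← Finset.prod_mul_distrib]
  gcongr with S _ T _
  · have h0 : 0 ≤ α S / γ := div_nonneg (hα S) hγpos.le
    rw [← ENNReal.mul_rpow_of_nonneg _ _ h0]
    refine ENNReal.rpow_le_rpow (le_of_eq ?_) h0
    rw [mul_assoc, ENNReal.inv_mul_cancel (hx _).1 (hx _).2, mul_one]
  · have h0 : 0 ≤ β T / γ := div_nonneg (hβ T) hγpos.le
    rw [← ENNReal.mul_rpow_of_nonneg _ _ h0]
    refine ENNReal.rpow_le_rpow ?_ h0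
    unfold condDens
    refine (safeDiv_le _ _).trans (le_of_eq ?_)
    rw [safeDiv, if_neg (hx _).1, div_eq_mul_inv]
    generalize marginal μ (T.1.1 ∪ T.1.2) q x * (marginal μ T.1.2 q x)⁻¹ = z
    have h1 := ENNReal.inv_mul_cancel (hx (T.1.1 ∪ T.1.2)).1 (hx (T.1.1 ∪ T.1.2)).2
    have h2 := ENNReal.mul_inv_cancel (hx T.1.2).1 (hx T.1.2).2
    calc z = z * (((marginal μ (T.1.1 ∪ T.1.2) r x)⁻¹ * marginal μ (T.1.1 ∪ T.1.2) r x) *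
          (marginal μ T.1.2 r x * (marginal μ T.1.2 r x)⁻¹)) := by rw [h1, h2]; simp
      _ = _ := by ring

lemma marginal_joint {d : ℕ} {π : Fin d → Type*} [∀ i, MeasurableSpace (π i)]
    (μ : ∀ i, Measure (π i)) [∀ i, SigmaFinite (μ i)] {Θ : Type*} [MeasurableSpace Θ]
    (p : Θ → (∀ i, π i) → ℝ≥0∞) (hp : Measurable (Function.uncurry p)) (S : Finset (Fin d)) :
    Measurable (fun z : Θ × (∀ i, π i) => marginal μ S (p z.1) z.2) := by
  unfold marginal lmarginal
  refine Measurable.lintegral_prod_right 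
    (f := fun (z : Θ × (∀ i, π i)) (w : ∀ i : (Sᶜ : Finset (Fin d)), π i) =>
      p z.1 (Function.updateFinset z.2 Sᶜ w)) ?_
  exact hp.comp ((measurable_fst.comp measurable_fst).prodMk
    (measurable_updateFinset'.comp ((measurable_snd.comp measurable_fst).prodMk measurable_snd)))

lemma GR_joint {d : ℕ} {π : Fin d → Type*} [∀ i, MeasurableSpace (π i)]
    (μ : ∀ i, Measure (π i)) [∀ i, SigmaFinite (μ i)] {Θ : Type*} [MeasurableSpace Θ]
    (p : Θ → (∀ i, π i) → ℝ≥0∞) (hp : Measurable (Function.uncurry p))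
    (α : Sd d → ℝ) (β : Td d → ℝ) (γ : ℝ) (r : (∀ i, π i) → ℝ≥0∞) (hr : Measurable r) :
    Measurable (fun z : Θ × (∀ i, π i) => GR μ α β γ (p z.1) r z.2) := by
  unfold GR
  have h1 := marginal_joint μ p hp
  have h2 : ∀ S, Measurable (fun z : Θ × (∀ i, π i) => marginal μ S r z.2) :=
    fun S => (marginal_meas μ S hr).comp measurable_snd
  refine Measurable.mul ?_ ?_
  · refine Finset.measurable_fun_prod _ (fun S _ => ?_)
    exact ((h1 _).mul (h2 _).inv).pow_const _
  · refine Finset.measurable_fun_prod _ (fun T _ => ?_)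
    exact (((h1 _).mul (h1 _).inv).mul ((h2 _).inv.mul (h2 _))).pow_const _

lemma GR_comp {d : ℕ} {π : Fin d → Type*} [∀ i, MeasurableSpace (π i)]
    (μ : ∀ i, Measure (π i)) [∀ i, SigmaFinite (μ i)] {Θ : Type*} [MeasurableSpace Θ]
    (p : Θ → (∀ i, π i) → ℝ≥0∞) (hp : Measurable (Function.uncurry p))
    (α : Sd d → ℝ) (β : Td d → ℝ) (γ : ℝ) (r : (∀ i, π i) → ℝ≥0∞) (hr : Measurable r)
    {Ω : Type*} (m : MeasurableSpace Ω) (θ : Ω → Θ) (X : Ω → (∀ i, π i))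
    (hθ : Measurable θ) (hX : Measurable X) :
    Measurable (fun ω => GR μ α β γ (p (θ ω)) r (X ω)) := by
  have h := (GR_joint μ p hp α β γ r hr).comp (hθ.prodMk hX)
  exact h

lemma indep_step {Ω Ω' E : Type*} [MeasurableSpace Ω] [MeasurableSpace Ω'] [MeasurableSpace E]
    (Pr : Measure Ω) [IsProbabilityMeasure Pr] (Y : Ω → Ω') (Z : Ω → E)
    (hY : Measurable Y) (hZ : Measurable Z) (hi : ProbabilityTheory.IndepFun Y Z Pr)
    (H : Ω' × E → ℝ≥0∞) (hH : Measurable H)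
    (hH1 : ∀ y, ∫⁻ x, H (y, x) ∂(Measure.map Z Pr) ≤ 1)
    (A : Ω' → ℝ≥0∞) (hA : Measurable A) :
    ∫⁻ ω, A (Y ω) * H (Y ω, Z ω) ∂Pr ≤ ∫⁻ ω, A (Y ω) ∂Pr := by
  have hm := (ProbabilityTheory.indepFun_iff_map_prod_eq_prod_map_map
    hY.aemeasurable hZ.aemeasurable).1 hi
  have : IsProbabilityMeasure (Pr.map Z) := Measure.isProbabilityMeasure_map hZ.aemeasurable
  have hK : Measurable (fun z : Ω' × E => A z.1 * H z) := (hA.comp measurable_fst).mul hH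
  calc ∫⁻ ω, A (Y ω) * H (Y ω, Z ω) ∂Pr
      = ∫⁻ z, A z.1 * H z ∂(Pr.map (fun ω => (Y ω, Z ω))) :=
        (lintegral_map hK (hY.prodMk hZ)).symm
    _ = ∫⁻ y, ∫⁻ x, A y * H (y, x) ∂(Pr.map Z) ∂(Pr.map Y) := by
        rw [hm, lintegral_prod _ hK.aemeasurable]
    _ ≤ ∫⁻ y, A y ∂(Pr.map Y) := by
        refine lintegral_mono (fun y => ?_)
        rw [lintegral_const_mul (f := fun x => H (y, x)) _ (hH.comp measurable_prodMk_left)]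
        calc _ ≤ A y * 1 := by gcongr; exact hH1 y
          _ = A y := mul_one _
    _ = _ := lintegral_map hA hY

lemma ville {Ω : Type*} [m0 : MeasurableSpace Ω] (Pr : Measure Ω) [IsProbabilityMeasure Pr]
    (F : ℕ → MeasurableSpace Ω) (hFle : ∀ n, F n ≤ m0) (hFmono : ∀ n, F n ≤ F (n + 1))
    (L : ℕ → Ω → ℝ≥0∞) (hL : ∀ n, Measurable[F (n + 1)] (L n))
    (hstep : ∀ n (A : Ω → ℝ≥0∞), Measurable[F n] A → ∫⁻ ω, A ω * L n ω ∂Pr ≤ ∫⁻ ω, A ω ∂Pr)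
    (c : ℝ≥0∞) (hc0 : c ≠ 0) (hct : c ≠ ⊤) :
    Pr {ω | ∃ m, c < ∏ i ∈ Finset.range m, L i ω} ≤ 1 / c := by
  have hmono : Monotone F := monotone_nat_of_le_succ hFmono
  let P : ℕ → Ω → ℝ≥0∞ := fun m ω => ∏ i ∈ Finset.range m, L i ω
  have hP : ∀ m n, m ≤ n → Measurable[F n] (P m) := by
    intro m n hmn
    refine Finset.measurable_fun_prod _ (fun i hi => ?_)
    exact (hL i).mono (hmono (by have := Finset.mem_range.1 hi; omega)) le_rfl
  let B : ℕ → Set Ω := fun n => {ω | ∀ m ≤ n, P m ω ≤ c}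
  have hB : ∀ n k, n ≤ k → MeasurableSet[F k] (B n) := by
    intro n k hnk
    have : B n = ⋂ m, ⋂ (_ : m ≤ n), {ω | P m ω ≤ c} := by ext; simp [B]
    rw [this]
    refine MeasurableSet.iInter (fun m => MeasurableSet.iInter (fun hm => ?_))
    exact (hP m k (hm.trans hnk)) measurableSet_Iic
  let L' : ℕ → Ω → ℝ≥0∞ := fun n ω => if ω ∈ B n then L n ω else 1
  let N : ℕ → Ω → ℝ≥0∞ := fun n ω => ∏ i ∈ Finset.range n, L' i ω
  have hN : ∀ n, Measurable[F n] (N n) := by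
    intro n
    refine Finset.measurable_fun_prod _ (fun i hi => ?_)
    have hi' : i + 1 ≤ n := Finset.mem_range.1 hi
    exact Measurable.ite (hB i n (by omega)) ((hL i).mono (hmono hi') le_rfl) measurable_const
  have hNint : ∀ n, ∫⁻ ω, N n ω ∂Pr ≤ 1 := by
    intro n
    induction n with
    | zero => simp [N]
    | succ n ih =>
      refine le_trans ?_ ih
      have hA : Measurable[F n] ((B n).indicator (N n)) := (hN n).indicator (hB n n le_rfl)
      have hA' : Measurable[F n] ((B n)ᶜ.indicator (N n)) :=
        (hN n).indicator (hB n n le_rfl).compl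
      have e1 : ∀ ω, N (n + 1) ω = (B n).indicator (N n) ω * L n ω + (B n)ᶜ.indicator (N n) ω := by
        intro ω
        have : N (n + 1) ω = N n ω * L' n ω := Finset.prod_range_succ _ _
        rw [this]
        by_cases h : ω ∈ B n <;> simp [L', h]
      have e2 : ∀ ω, N n ω = (B n).indicator (N n) ω + (B n)ᶜ.indicator (N n) ω := by
        intro ω
        by_cases h : ω ∈ B n <;> simp [h]
      calc ∫⁻ ω, N (n + 1) ω ∂Pr
          = ∫⁻ ω, (B n).indicator (N n) ω * L n ω ∂Pr + ∫⁻ ω, (B n)ᶜ.indicator (N n) ω ∂Pr := by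
            simp_rw [e1]
            exact lintegral_add_right _ (hA'.mono (hFle n) le_rfl)
        _ ≤ ∫⁻ ω, (B n).indicator (N n) ω ∂Pr + ∫⁻ ω, (B n)ᶜ.indicator (N n) ω ∂Pr := by
            gcongr ?_ + _
            exact hstep n _ hA
        _ = ∫⁻ ω, N n ω ∂Pr := by
            rw [← lintegral_add_right _ (hA'.mono (hFle n) le_rfl)]
            exact lintegral_congr (fun ω => (e2 ω).symm)
  have hlow : ∀ n ω, (∃ m ≤ n, c < P m ω) → c < N n ω := by
    intro n ω
    have c1 : ∀ n, (∀ m < n, P m ω ≤ c) → N n ω = P n ω := by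
      intro n h
      refine Finset.prod_congr rfl (fun i hi => ?_)
      have hi' := Finset.mem_range.1 hi
      have : ω ∈ B i := fun m hm => h m (lt_of_le_of_lt hm hi')
      simp [L', this]
    induction n with
    | zero =>
      rintro ⟨m, hm, h⟩
      rw [c1 0 (by simp)]
      obtain rfl : m = 0 := by omega
      exact h
    | succ n ih =>
      rintro ⟨m, hm, h⟩
      by_cases hex : ∃ m ≤ n, c < P m ω
      · have h1 := ih hex
        have : N (n + 1) ω = N n ω * L' n ω := Finset.prod_range_succ _ _
        have hnB : ω ∉ B n := by
          intro hb
          obtain ⟨k, hk, hk'⟩ := hex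
          exact absurd (hb k hk) (not_le.2 hk')
        rw [this]
        simpa [L', hnB] using h1
      · push Not at hex
        rw [c1 (n + 1) (fun k hk => hex k (by omega))]
        have : m = n + 1 := by
          by_contra hne
          exact absurd (hex m (by omega)) (not_le.2 h)
        rwa [← this]
  have hU : {ω | ∃ m, c < ∏ i ∈ Finset.range m, L i ω} = ⋃ n, {ω | ∃ m ≤ n, c < P m ω} := by
    ext ω
    simp only [Set.mem_ofPred_eq, Set.mem_iUnion]
    exact ⟨fun ⟨m, h⟩ => ⟨m, m, le_rfl, h⟩, fun ⟨_, m, _, h⟩ => ⟨m, h⟩⟩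
  have hUm : Monotone (fun n => {ω | ∃ m ≤ n, c < P m ω}) := by
    rintro a b hab ω ⟨m, hm, h⟩
    exact ⟨m, hm.trans hab, h⟩
  rw [hU, hUm.measure_iUnion]
  refine iSup_le (fun n => ?_)
  calc Pr {ω | ∃ m ≤ n, c < P m ω} ≤ Pr {ω | c ≤ N n ω} :=
        measure_mono (fun ω h => (hlow n ω h).le)
    _ ≤ (∫⁻ ω, N n ω ∂Pr) / c :=
        meas_ge_le_lintegral_div ((hN n).mono (hFle n) le_rfl).aemeasurable hc0 hct
    _ ≤ 1 / c := by gcongr; exact hNint n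

end Helpers

/-- The sequence of intersected sets `(D̃_n^a)_{n∈ℕ}`, where
`D̃_n^a = ⋂_{m ≤ n} D_m^a` and `D_m^a = {θ ∈ Θ : R_{α,β,m}(θ) ≤ 1/a}`, is a valid
confidence sequence: `Pr_{θ*}(∀ n ∈ ℕ : θ* ∈ D̃_n^a) ≥ 1 − a` for every `a ∈ (0,1)`. -/
theorem running_intersected_confidence_sequence_valid
    {d : ℕ} (hd : 1 ≤ d)
    {π : Fin d → Type*} [∀ i, MeasurableSpace (π i)]
    (μ : ∀ i, Measure (π i)) [∀ i, SigmaFinite (μ i)]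
    {Θ : Type*} [MeasurableSpace Θ]
    (p : Θ → (∀ i, π i) → ℝ≥0∞)
    (hp_meas : Measurable (Function.uncurry p))
    (hp_prob : ∀ θ : Θ, ∫⁻ x, p θ x ∂(Measure.pi μ) = 1)
    (α : Sd d → ℝ) (β : Td d → ℝ)
    (hα : ∀ S, 0 ≤ α S) (hβ : ∀ T, 0 ≤ β T)
    (γ : ℝ) (hγ : γ = ∑ S, α S + ∑ T, β T) (hγpos : 0 < γ)
    {Ω : Type*} [MeasurableSpace Ω]
    (Pr : Measure Ω) [IsProbabilityMeasure Pr]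
    (θstar : Θ)
    -- `X 0, X 1, X 2, …` is the i.i.d. sequence `X_1, X_2, …` (0-indexed),
    -- each observation having density `p(·;θ*)` with respect to `μ`
    (X : ℕ → Ω → (∀ i, π i))
    (hX : ∀ i, Measurable (X i))
    (hiid : ProbabilityTheory.iIndepFun X Pr)
    (hlaw : ∀ i, Measure.map (X i) Pr = (Measure.pi μ).withDensity (p θstar))
    -- the natural filtration `F n = σ(X_1,…,X_n)` (so `F 0` is trivial)
    (F : ℕ → MeasurableSpace Ω)
    (hF : ∀ n, F n = MeasurableSpace.comap (fun ω => fun j : Fin n => X j ω)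
      (inferInstance : MeasurableSpace (Fin n → ∀ i, π i)))
    -- non-anticipating estimators: `θtilde i` is the estimator `θ̃_i`
    -- built from `X_1,…,X_i`, i.e. measurable with respect to `F i`
    (θtilde : ℕ → Ω → Θ)
    (hθtilde : ∀ i, @Measurable Ω Θ (F i) _ (θtilde i))
    (a : ℝ) (ha0 : 0 < a) (ha1 : a < 1) :
    ENNReal.ofReal (1 - a) ≤
      Pr {ω | ∀ n : ℕ, ∀ m ≤ n, safeDiv
          (∏ i ∈ Finset.range m, compLik μ α β γ (p (θtilde i ω)) (X i ω))
          (∏ i ∈ Finset.range m, compLik μ α β γ (p θstar) (X i ω))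
        ≤ 1 / ENNReal.ofReal a} := by
  have hFle : ∀ n, F n ≤ (inferInstance : MeasurableSpace Ω) := by
    intro n
    rw [hF n]
    exact (measurable_pi_iff.2 (fun j : Fin n => hX j)).comap_le
  have hXF : ∀ i n, i < n → Measurable[F n] (X i) := by
    intro i n hin
    rw [hF n]
    exact (measurable_pi_apply (⟨i, hin⟩ : Fin n)).comp
      (comap_measurable (fun ω => fun j : Fin n => X j ω))
  have hFmono : ∀ n, F n ≤ F (n + 1) := by
    intro n
    rw [hF n]
    refine Measurable.comap_le (m₁ := F (n + 1)) ?_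
    exact @measurable_pi_lambda _ _ _ (F (n + 1)) _ _ (fun j => hXF j (n + 1) (by omega))
  have hr : Measurable (p θstar) := hp_meas.comp measurable_prodMk_left
  have hq : ∀ θ, Measurable (p θ) := fun θ => hp_meas.comp measurable_prodMk_left
  let L : ℕ → Ω → ℝ≥0∞ := fun n ω => GR μ α β γ (p (θtilde n ω)) (p θstar) (X n ω)
  have hL : ∀ n, Measurable[F (n + 1)] (L n) := by
    intro n
    exact GR_comp μ p hp_meas α β γ (p θstar) hr (F (n + 1)) (θtilde n) (X n)
      ((hθtilde n).mono (hFmono n) le_rfl) (hXF n (n + 1) (by omega))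
  have hind : ∀ n, @ProbabilityTheory.IndepFun Ω Ω (∀ i, π i) _ (F n) _ id (X n) Pr := by
    intro n
    have h1 := hiid.indepFun_finset (Finset.range n) {n} (by simp) hX
    have h2 : ProbabilityTheory.IndepFun (fun ω => fun j : Fin n => X j ω) (X n) Pr :=
      h1.comp (φ := fun (z : (∀ _ : (Finset.range n), (∀ i, π i))) (j : Fin n) =>
          z ⟨j, Finset.mem_range.2 j.2⟩)
        (ψ := fun (z : (∀ _ : ({n} : Finset ℕ), (∀ i, π i))) => z ⟨n, by simp⟩)
        (measurable_pi_iff.2 (fun j => measurable_pi_apply _)) (measurable_pi_apply _)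
    rw [ProbabilityTheory.IndepFun_iff_Indep] at h2
    refine (@ProbabilityTheory.IndepFun_iff_Indep Ω Ω (∀ i, π i) _ (F n) _ id (X n) Pr).2 ?_
    rw [MeasurableSpace.comap_id, hF n]
    exact h2
  have hstep : ∀ n (A : Ω → ℝ≥0∞), Measurable[F n] A →
      ∫⁻ ω, A ω * L n ω ∂Pr ≤ ∫⁻ ω, A ω ∂Pr := by
    intro n A hA
    refine @indep_step Ω Ω (∀ i, π i) _ (F n) _ Pr _ id (X n)
      (measurable_id'' (hFle n)) (hX n) (hind n)
      (fun z => GR μ α β γ (p (θtilde n z.1)) (p θstar) z.2) ?_ ?_ A hA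
    · exact GR_comp μ p hp_meas α β γ (p θstar) hr (@Prod.instMeasurableSpace _ _ (F n) _)
        (fun z => θtilde n z.1) (fun z => z.2)
        (@Measurable.comp _ _ _ (@Prod.instMeasurableSpace _ _ (F n) _) (F n) _ _ _
          (hθtilde n) (@measurable_fst _ _ (F n) _)) (@measurable_snd _ _ (F n) _)
    · intro y
      rw [hlaw n]
      exact GR_int μ α β γ hα hβ hγ hγpos 
        (q := p (θtilde n y)) (r := p θstar) (hq (θtilde n y)) hr
        (hp_prob (θtilde n y)) (hp_prob θstar)
  have hc0 : 1 / ENNReal.ofReal a ≠ 0 := by simp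
  have hct : 1 / ENNReal.ofReal a ≠ ⊤ := by simp [ha0]
  have hv := ville Pr F hFle hFmono L hL hstep (1 / ENNReal.ofReal a) hc0 hct
  have hinv : 1 / (1 / ENNReal.ofReal a) = ENNReal.ofReal a := by simp
  rw [hinv] at hv
  have hgood : ∀ᵐ ω ∂Pr, ∀ i, ∀ S,
      marginal μ S (p θstar) (X i ω) ≠ 0 ∧ marginal μ S (p θstar) (X i ω) ≠ ⊤ := by
    rw [ae_all_iff]; intro i
    rw [ae_all_iff]; intro S
    have := marg_good μ S hr (hp_prob θstar)
    rw [← hlaw i] at this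
    exact ae_of_ae_map (p := fun x => marginal μ S (p θstar) x ≠ 0 ∧ marginal μ S (p θstar) x ≠ ⊤)
      (hX i).aemeasurable this
  set V := {ω | ∃ m, 1 / ENNReal.ofReal a < ∏ i ∈ Finset.range m, L i ω} with hV
  have hVm : MeasurableSet V := by
    have : V = ⋃ m, {ω | 1 / ENNReal.ofReal a < ∏ i ∈ Finset.range m, L i ω} := by
      ext; simp [hV]
    rw [this]
    refine MeasurableSet.iUnion (fun m => ?_)
    exact measurableSet_lt measurable_const (Finset.measurable_fun_prod _
      (fun i _ => (hL i).mono (hFle _) le_rfl))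
  calc ENNReal.ofReal (1 - a) = 1 - ENNReal.ofReal a := by
        rw [ENNReal.ofReal_sub _ ha0.le, ENNReal.ofReal_one]
    _ ≤ 1 - Pr V := by gcongr
    _ = Pr Vᶜ := (prob_compl_eq_one_sub hVm).symm
    _ ≤ _ := by
      refine measure_mono_ae ?_
      filter_upwards [hgood] with ω hω hωV n m _
      have hle : ∏ i ∈ Finset.range m, L i ω ≤ 1 / ENNReal.ofReal a := by
        by_contra hcon
        exact hωV ⟨m, not_le.1 hcon⟩
      refine le_trans ?_ hle
      unfold safeDiv
      split_ifs
      · exact zero_le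
      · refine ENNReal.div_le_of_le_mul ?_
        rw [← Finset.prod_mul_distrib]
        exact Finset.prod_le_prod' (fun i _ =>
          compLik_le μ α β γ hα hβ hγpos _ _ _ (hω i))
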